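/- An element A ∈ SL(n, ℂ) is c-reversible (conjugate in GL(n,ℂ) to (conj A)⁻¹) if and only if the multiset of Jordan blocks of A is invariant under the map J(λ, m) ↦ J(conj(λ)⁻¹, m); equivalently, the blocks partition into pairs {J(λ,m), J(conj(λ)⁻¹, m)} with |λ| ≠ 1 and singletons J(μ, m) with |μ| = 1. -/

import Mathlib

open Matrix

/-- The `m × m` Jordan block with eigenvalue `λ`. -/
def jordanBlock (lam : ℂ) (m : ℕ) : Matrix (Fin m) (Fin m) ℂ :=
  Matrix.of fun i j => if (j : ℕ) = i then lam else if (j : ℕ) = i + 1 then 1 else 0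

/-!
Over an algebraically closed field, the Jordan form of `A` is determined by the ranks of the
matrices `(A - μ) ^ j`: a block `J(μ, m)` contributes `min m j` to the nullity, and the second
difference of this in `j` detects the size `m`. If `A` is invertible then
`A⁻¹ - μ⁻¹ = -μ⁻¹ A⁻¹ (A - μ)` for `μ ≠ 0`, so `(A⁻¹ - μ⁻¹) ^ j` and `(A - μ) ^ j` have the same
rank and the blocks of `A⁻¹` are the `J(λ⁻¹, m)`. A field endomorphism `τ` maps the block `J(λ, m)`
entrywise to `J(τ λ, m)`. Hence `(τ A)⁻¹` has the blocks `J((τ λ)⁻¹, m)`, and it is similar to `A`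
iff these are the blocks of `A` up to order.
-/

section Conjugacy

variable {n R : Type*} [Fintype n] [DecidableEq n]

lemma isConj_iff_exists_isUnit [CommRing R] {A B : Matrix n n R} :
    IsConj A B ↔ ∃ P : Matrix n n R, IsUnit P ∧ P * A * P⁻¹ = B := by
  constructor
  · rintro ⟨P, hP⟩
    refine ⟨P, P.isUnit, ?_⟩
    rw [hP.eq, mul_nonsing_inv_cancel_right _ _ ((isUnit_iff_isUnit_det _).1 P.isUnit)]
  · rintro ⟨P, hP, rfl⟩
    refine ⟨hP.unit, ?_⟩
    rw [SemiconjBy, hP.unit_spec,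
      nonsing_inv_mul_cancel_right _ _ ((isUnit_iff_isUnit_det P).1 hP)]

lemma isConj_reindex [Semiring R] (π : Equiv.Perm n) (A : Matrix n n R) :
    IsConj A (reindex π π A) := by
  refine ⟨Units.map permMatrixHom (toUnits π), ?_⟩
  ext i j
  simp [permMatrixHom, PEquiv.toMatrix_toPEquiv_mul, PEquiv.mul_toMatrix_toPEquiv,
    Equiv.Perm.inv_def]

lemma isConj_sub_algebraMap [CommRing R] {A B : Matrix n n R} (h : IsConj A B) (μ : R) :
    IsConj (A - algebraMap R _ μ) (B - algebraMap R _ μ) := by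
  obtain ⟨P, hP⟩ := h
  exact ⟨P, hP.sub_right (Algebra.commutes μ (P : Matrix n n R)).symm⟩

lemma rank_eq_of_isConj [CommRing R] {A B : Matrix n n R} (h : IsConj A B) : A.rank = B.rank := by
  obtain ⟨P, hP⟩ := h
  have hdet : IsUnit (P : Matrix n n R).det := (isUnit_iff_isUnit_det _).1 P.isUnit
  rw [← rank_mul_eq_right_of_isUnit_det _ A hdet, hP.eq, rank_mul_eq_left_of_isUnit_det _ _ hdet]

end Conjugacy

/-- The Jordan block over an arbitrary coefficient ring, with the index convention of
`jordanBlock`, to which it reduces definitionally over `ℂ`. -/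
def jordanCell {R : Type*} [Zero R] [One R] (a : R) (m : ℕ) : Matrix (Fin m) (Fin m) R :=
  .of fun i j => if (j : ℕ) = i then a else if (j : ℕ) = i + 1 then 1 else 0

/-- The Jordan matrix with blocks `J(lam i, m i)`, rows and columns being indexed by pairs of a
block and a position in it. Blocks of size `0` are allowed. -/
def jordanMatrix {ι R : Type*} [DecidableEq ι] [Zero R] [One R] (lam : ι → R) (m : ι → ℕ) :
    Matrix (Σ i, Fin (m i)) (Σ i, Fin (m i)) R :=
  blockDiagonal' fun i => jordanCell (lam i) (m i)

/-- The dimension of the kernel of `(J - μ) ^ j`, where `J` is the Jordan matrix with blocks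
`J(lam i, m i)`, expressed through the block data. -/
noncomputable def jordanNullity {ι K : Type*} [Fintype ι] (lam : ι → K) (m : ι → ℕ) (μ : K)
    (j : ℕ) : ℕ :=
  open Classical in ∑ i, if lam i = μ then min (m i) j else 0

section JordanMatrix

variable {ι κ R S : Type*} [DecidableEq ι] [DecidableEq κ]

lemma jordanCell_sub_algebraMap [CommRing R] (a μ : R) (m : ℕ) :
    jordanCell a m - algebraMap R _ μ = jordanCell (a - μ) m := by
  ext i j
  simp only [jordanCell, Matrix.sub_apply, of_apply, algebraMap_matrix_apply,
    Algebra.algebraMap_self_apply, Fin.ext_iff]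
  grind

lemma jordanMatrix_sub_algebraMap [Fintype ι] [CommRing R] (lam : ι → R) (m : ι → ℕ) (μ : R) :
    jordanMatrix lam m - algebraMap R _ μ = jordanMatrix (fun i => lam i - μ) m := by
  have hμ : algebraMap R (Matrix (Σ i, Fin (m i)) (Σ i, Fin (m i)) R) μ =
      blockDiagonal' fun i => algebraMap R (Matrix (Fin (m i)) (Fin (m i)) R) μ := by
    simp only [Algebra.algebraMap_eq_smul_one]
    rw [← blockDiagonal'_one]
    exact (blockDiagonal'_smul μ _).symm
  rw [jordanMatrix, hμ, ← blockDiagonal'_sub]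
  simp only [Pi.sub_def, jordanCell_sub_algebraMap, jordanMatrix]

lemma jordanMatrix_map [NonAssocSemiring R] [NonAssocSemiring S] (τ : R →+* S) (lam : ι → R)
    (m : ι → ℕ) : (jordanMatrix lam m).map τ = jordanMatrix (τ ∘ lam) m := by
  rw [jordanMatrix, blockDiagonal'_map _ _ (map_zero τ), jordanMatrix]
  congr! with i
  ext
  simp [jordanCell, apply_ite τ]

lemma jordanMatrix_comp [Zero R] [One R] (lam : κ → R) (m : κ → ℕ) {s : ι → κ}
    (hs : s.Injective) :
    jordanMatrix (lam ∘ s) (m ∘ s) =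
      (jordanMatrix lam m).submatrix (Sigma.map s fun _ => id) (Sigma.map s fun _ => id) := by
  ext ⟨i, a⟩ ⟨j, b⟩
  obtain rfl | hij := eq_or_ne i j
  · simp [jordanMatrix, Sigma.map]
  · simp [jordanMatrix, Sigma.map, blockDiagonal'_apply_ne, hij, hs.ne hij]

end JordanMatrix

section Rank

variable {n ι R K : Type*} [Field K]

lemma rank_add_card_of_mulVec_eq_zero_iff [Fintype n] (A : Matrix n n K)
    (s : Finset n) (hA : ∀ x, A *ᵥ x = 0 ↔ ∀ i ∉ s, x i = 0) :
    A.rank + s.card = Fintype.card n := by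
  classical
  have hker : A.mulVecLin.ker = ⨅ i ∈ (s : Set n)ᶜ, (LinearMap.proj i : (n → K) →ₗ[K] K).ker := by
    ext x
    simp [hA]
  have hnull : Module.finrank K A.mulVecLin.ker = s.card := by
    rw [hker, (LinearMap.iInfKerProjEquiv K (fun _ : n => K) disjoint_compl_right
      (Set.union_compl_self (s : Set n)).ge).finrank_eq]
    simp
  rw [rank, ← hnull, LinearMap.finrank_range_add_finrank_ker, Module.finrank_fintype_fun_eq_card]

lemma isUnit_jordanCell [CommRing R] {a : R} (ha : IsUnit a) (m : ℕ) : IsUnit (jordanCell a m) := by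
  have htri : (jordanCell a m).IsUpperTriangular := by
    intro i j hij
    have : (j : ℕ) < i := hij
    simp only [jordanCell, of_apply]
    grind
  rw [isUnit_iff_isUnit_det, det_of_isUpperTriangular htri]
  simpa [jordanCell] using ha.pow m

lemma jordanCell_zero_mulVec [NonAssocSemiring R] {m : ℕ} (v : Fin m → R) (i : Fin m) :
    (jordanCell 0 m *ᵥ v) i = if h : i + 1 < m then v ⟨i + 1, h⟩ else 0 := by
  have hentry (l : Fin m) : jordanCell (0 : R) m i l = if (l : ℕ) = i + 1 then 1 else 0 := by
    simp only [jordanCell, of_apply]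
    grind
  simp only [mulVec, dotProduct, hentry, ite_mul, one_mul, zero_mul]
  split_ifs with h
  · rw [Fintype.sum_eq_single ⟨i + 1, h⟩ fun l hl => if_neg (Fin.val_ne_of_ne hl)]
    simp
  · exact Finset.sum_eq_zero fun l _ => if_neg (by omega)

lemma jordanCell_zero_pow_mulVec [Semiring R] {m : ℕ} (j : ℕ) (v : Fin m → R) (i : Fin m) :
    (jordanCell 0 m ^ j *ᵥ v) i = if h : i + j < m then v ⟨i + j, h⟩ else 0 := by
  induction j generalizing v with
  | zero => simp
  | succ j ih =>
    rw [pow_succ, ← mulVec_mulVec, ih]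
    split_ifs with h h'
    · rw [jordanCell_zero_mulVec]
      grind
    · rw [jordanCell_zero_mulVec]
      grind
    · grind
    · rfl

lemma jordanCell_pow_mulVec_eq_zero_iff (a : K) {m : ℕ} (j : ℕ) (v : Fin m → K) :
    jordanCell a m ^ j *ᵥ v = 0 ↔ ∀ l : Fin m, ¬(a = 0 ∧ l < j) → v l = 0 := by
  obtain rfl | ha := eq_or_ne a 0
  · simp only [funext_iff, jordanCell_zero_pow_mulVec, Pi.zero_apply, dite_eq_right_iff, true_and,
      not_lt]
    refine ⟨fun h l hl => ?_, fun h i hi => h _ (Nat.le_add_left j i)⟩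
    simpa [Nat.sub_add_cancel hl] using h ⟨l - j, by omega⟩ (by simp; omega)
  · rw [← mulVec_zero (jordanCell a m ^ j),
      (mulVec_injective_of_isUnit ((isUnit_jordanCell ha.isUnit m).pow j)).eq_iff]
    simp [ha, funext_iff]

lemma blockDiagonal'_mulVec_apply {m : ι → Type*} [Fintype ι] [DecidableEq ι]
    [∀ i, Fintype (m i)] [NonUnitalNonAssocSemiring R]
    (M : ∀ i, Matrix (m i) (m i) R) (x : (Σ i, m i) → R) (i : ι) (a : m i) :
    (blockDiagonal' M *ᵥ x) ⟨i, a⟩ = (M i *ᵥ fun b => x ⟨i, b⟩) a := by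
  simp only [mulVec, dotProduct, Fintype.sum_sigma]
  rw [Fintype.sum_eq_single i fun i' hi' => Finset.sum_eq_zero fun b _ => by
    rw [blockDiagonal'_apply_ne _ _ _ hi'.symm, zero_mul]]
  simp only [blockDiagonal'_apply_eq]

lemma rank_jordanMatrix_pow [Fintype ι] [DecidableEq ι] (lam : ι → K) (m : ι → ℕ) (j : ℕ) :
    (jordanMatrix lam m ^ j).rank + jordanNullity lam m 0 j = Fintype.card (Σ i, Fin (m i)) := by
  classical
  let s : Finset (Σ i, Fin (m i)) := {a | lam a.1 = 0 ∧ a.2 < j}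
  have hs : s.card = jordanNullity lam m 0 j := by
    rw [jordanNullity, Finset.card_filter, Fintype.sum_sigma]
    refine Finset.sum_congr rfl fun i _ => ?_
    split_ifs with hi
    · simp [hi, Fin.card_filter_val_lt]
    · simp [hi]
  rw [← hs]
  refine rank_add_card_of_mulVec_eq_zero_iff _ s fun x => ?_
  calc jordanMatrix lam m ^ j *ᵥ x = 0
      ↔ ∀ i, jordanCell (lam i) (m i) ^ j *ᵥ (fun b => x ⟨i, b⟩) = 0 := by
        simp [jordanMatrix, ← blockDiagonal'_pow, funext_iff, Sigma.forall,
          blockDiagonal'_mulVec_apply]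
    _ ↔ ∀ a ∉ s, x a = 0 := by
        simp [jordanCell_pow_mulVec_eq_zero_iff, Sigma.forall, s]

end Rank

/-- `A` is similar to the Jordan matrix with blocks `J(lam i, m i)`, for some identification `e` of
the index type of that matrix with the one of `A`. -/
def HasJordanForm {n ι R : Type*} [Fintype n] [DecidableEq n] [DecidableEq ι] [Semiring R]
    (A : Matrix n n R) (lam : ι → R) (m : ι → ℕ) : Prop :=
  ∃ e : (Σ i, Fin (m i)) ≃ n, IsConj (reindex e e (jordanMatrix lam m)) A

namespace HasJordanForm

variable {n ι R S : Type*} [Fintype n] [DecidableEq n] [DecidableEq ι] [Semiring R] [Semiring S]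
  {A B : Matrix n n R} {lam : ι → R} {m : ι → ℕ}

lemma of_isConj (hA : HasJordanForm A lam m) (hAB : IsConj A B) : HasJordanForm B lam m :=
  hA.imp fun _ he => he.trans hAB

lemma isConj (hA : HasJordanForm A lam m) (hB : HasJordanForm B lam m) : IsConj A B := by
  obtain ⟨e, he⟩ := hA
  obtain ⟨e', he'⟩ := hB
  have hee' : reindex e' e' (jordanMatrix lam m) =
      reindex (e.symm.trans e') (e.symm.trans e') (reindex e e (jordanMatrix lam m)) := by
    ext
    simp
  exact he.symm.trans ((hee' ▸ isConj_reindex _ _).trans he')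

lemma map (hA : HasJordanForm A lam m) (τ : R →+* S) : HasJordanForm (A.map τ) (τ ∘ lam) m := by
  obtain ⟨e, he⟩ := hA
  refine ⟨e, ?_⟩
  rw [← jordanMatrix_map]
  exact τ.mapMatrix.toMonoidHom.map_isConj he

end HasJordanForm

lemma hasJordanForm_comp_iff {n ι κ R : Type*} [Fintype n] [DecidableEq n] [DecidableEq ι]
    [DecidableEq κ] [Semiring R] {A : Matrix n n R} {lam : κ → R} {m : κ → ℕ} {s : ι → κ}
    (hs : s.Injective) (hm : ∀ i ∉ Set.range s, m i = 0) :
    HasJordanForm A (lam ∘ s) (m ∘ s) ↔ HasJordanForm A lam m := by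
  have hbij : Function.Bijective
      (Sigma.map s fun _ => id : (Σ i, Fin (m (s i))) → Σ i, Fin (m i)) := by
    refine ⟨hs.sigma_map fun _ => Function.injective_id, fun ⟨i, a⟩ => ?_⟩
    obtain ⟨i, rfl⟩ : i ∈ Set.range s := by
      by_contra hi
      exact (hm i hi ▸ a).elim0
    exact ⟨⟨i, a⟩, rfl⟩
  let E := Equiv.ofBijective _ hbij
  have hE : jordanMatrix (lam ∘ s) (m ∘ s) = (jordanMatrix lam m).submatrix E E :=
    jordanMatrix_comp lam m hs
  constructor
  · rintro ⟨e, he⟩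
    refine ⟨E.symm.trans e, ?_⟩
    rw [hE] at he
    simpa [Function.comp_def] using he
  · rintro ⟨e, he⟩
    refine ⟨E.trans e, ?_⟩
    rw [hE]
    simpa [Function.comp_def] using he

lemma hasJordanForm_iff_exists_isUnit {n ι R : Type*} [Fintype n] [DecidableEq n]
    [DecidableEq ι] [CommRing R] {A : Matrix n n R} {lam : ι → R} {m : ι → ℕ} :
    HasJordanForm A lam m ↔ ∃ (e : (Σ i, Fin (m i)) ≃ n) (Q : Matrix n n R),
      IsUnit Q ∧ A = Q * reindex e e (jordanMatrix lam m) * Q⁻¹ := by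
  simp only [HasJordanForm, isConj_iff_exists_isUnit, eq_comm]

section BlockCount

variable {ι κ K : Type*} [Fintype ι] [Fintype κ]

lemma jordanNullity_map_of_injective {L : Type*} {f : K → L} (hf : f.Injective) (lam : ι → K)
    (m : ι → ℕ) (μ : K) (j : ℕ) :
    jordanNullity (fun i => f (lam i)) m (f μ) j = jordanNullity lam m μ j := by
  classical
  exact Finset.sum_congr rfl fun _ _ => if_congr hf.eq_iff rfl rfl

lemma jordanNullity_comp (lam : κ → K) (m : κ → ℕ) {s : ι → κ} (hs : s.Injective)
    (hm : ∀ i ∉ Set.range s, m i = 0) (μ : K) (j : ℕ) :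
    jordanNullity (lam ∘ s) (m ∘ s) μ j = jordanNullity lam m μ j :=
  Fintype.sum_of_injective s hs _ _ (fun i hi => by simp [hm i hi]) fun _ => rfl

lemma card_add_jordanNullity (lam : ι → K) (m : ι → ℕ) (μ : K) (r : ℕ) :
    Nat.card {i // (lam i, m i) = (μ, r + 1)} + jordanNullity lam m μ r +
      jordanNullity lam m μ (r + 2) = 2 * jordanNullity lam m μ (r + 1) := by
  classical
  rw [Nat.card_eq_fintype_card, Fintype.card_subtype, Finset.card_filter]
  simp only [jordanNullity, ← Finset.sum_add_distrib, Finset.mul_sum, Prod.mk.injEq]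
  refine Finset.sum_congr rfl fun i _ => ?_
  -- The second difference of `min (m i) ·` at `r + 1` is `-1` if `m i = r + 1`, and `0` otherwise.
  grind

lemma exists_equiv_of_jordanNullity_eq {lam : ι → K} {m : ι → ℕ} {lam' : κ → K} {m' : κ → ℕ}
    (hm : ∀ i, 0 < m i) (hm' : ∀ i, 0 < m' i)
    (h : ∀ μ j, jordanNullity lam m μ j = jordanNullity lam' m' μ j) :
    ∃ e : ι ≃ κ, lam' ∘ e = lam ∧ m' ∘ e = m := by
  have hfiber (c : K × ℕ) :
      Nonempty ({i // (lam i, m i) = c} ≃ {i // (lam' i, m' i) = c}) := by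
    refine Finite.card_eq.1 ?_
    obtain ⟨μ, _ | r⟩ := c
    · have : IsEmpty {i // (lam i, m i) = (μ, 0)} :=
        ⟨fun i => (hm i).ne' (Prod.ext_iff.1 i.2).2⟩
      have : IsEmpty {i // (lam' i, m' i) = (μ, 0)} :=
        ⟨fun i => (hm' i).ne' (Prod.ext_iff.1 i.2).2⟩
      simp only [Nat.card_of_isEmpty]
    · have hcard := card_add_jordanNullity lam m μ r
      have hcard' := card_add_jordanNullity lam' m' μ r
      simp only [h] at hcard
      omega
  let E (c : K × ℕ) := (hfiber c).some
  let e := Equiv.ofFiberEquiv E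
  have he (i : ι) : (lam' (e i), m' (e i)) = (lam i, m i) := Equiv.ofFiberEquiv_map E i
  exact ⟨e, funext fun i => congrArg Prod.fst (he i), funext fun i => congrArg Prod.snd (he i)⟩

end BlockCount

section Uniqueness

variable {n ι κ K : Type*} [Fintype n] [DecidableEq n] [DecidableEq ι] [DecidableEq κ] [Field K]

lemma HasJordanForm.rank_add_jordanNullity [Fintype ι] {A : Matrix n n K} {lam : ι → K}
    {m : ι → ℕ} (hA : HasJordanForm A lam m) (μ : K) (j : ℕ) :
    ((A - algebraMap K _ μ) ^ j).rank + jordanNullity lam m μ j = Fintype.card n := by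
  obtain ⟨e, he⟩ := hA
  have hrank : ((A - algebraMap K _ μ) ^ j).rank =
      ((jordanMatrix lam m - algebraMap K _ μ) ^ j).rank := by
    rw [← rank_eq_of_isConj ((isConj_sub_algebraMap he μ).pow j), ← rank_reindex e e,
      ← coe_reindexAlgEquiv K K, map_pow, map_sub, AlgEquiv.commutes]
  have hnull : jordanNullity lam m μ j = jordanNullity (fun i => lam i - μ) m 0 j := by
    simpa using (jordanNullity_map_of_injective (sub_left_injective (b := μ)) lam m μ j).symm
  rw [hrank, hnull, jordanMatrix_sub_algebraMap, rank_jordanMatrix_pow, Fintype.card_congr e]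

lemma HasJordanForm.exists_equiv [Finite ι] [Finite κ] {A : Matrix n n K} {lam : ι → K}
    {m : ι → ℕ} {lam' : κ → K} {m' : κ → ℕ} (hA : HasJordanForm A lam m)
    (hA' : HasJordanForm A lam' m') (hm : ∀ i, 0 < m i) (hm' : ∀ i, 0 < m' i) :
    ∃ e : ι ≃ κ, lam' ∘ e = lam ∧ m' ∘ e = m := by
  cases nonempty_fintype ι
  cases nonempty_fintype κ
  refine exists_equiv_of_jordanNullity_eq hm hm' fun μ j => ?_
  have h := hA.rank_add_jordanNullity μ j
  have h' := hA'.rank_add_jordanNullity μ j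
  omega

end Uniqueness

section Existence

open Polynomial Module

universe u

variable {K : Type u} [Field K]

lemma isConj_toMatrix {n R M : Type*} [Fintype n] [DecidableEq n] [CommRing R] [AddCommGroup M]
    [Module R M] (b c : Basis n R M) (f : End R M) :
    IsConj (LinearMap.toMatrix b b f) (LinearMap.toMatrix c c f) := by
  refine ⟨⟨c.toMatrix b, b.toMatrix c, c.toMatrix_mul_toMatrix_flip b,
    b.toMatrix_mul_toMatrix_flip c⟩, ?_⟩
  simp [SemiconjBy]

lemma toMatrix_piMap_basis {ι R : Type*} [Fintype ι] [DecidableEq ι] [CommSemiring R]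
    {M : ι → Type*} {κ : ι → Type*} [∀ i, AddCommMonoid (M i)] [∀ i, Module R (M i)]
    [∀ i, Fintype (κ i)] [∀ i, DecidableEq (κ i)] (b : ∀ i, Basis (κ i) R (M i))
    (f : ∀ i, End R (M i)) :
    LinearMap.toMatrix (Pi.basis b) (Pi.basis b) (LinearMap.piMap f) =
      blockDiagonal' fun i => LinearMap.toMatrix (b i) (b i) (f i) := by
  ext ⟨i, a⟩ ⟨j, c⟩
  rw [LinearMap.toMatrix_apply, Pi.basis_repr, Pi.basis_apply, LinearMap.coe_piMap, Pi.map_apply]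
  obtain rfl | hij := eq_or_ne i j
  · simp [LinearMap.toMatrix_apply]
  · simp [hij, blockDiagonal'_apply_ne]

lemma linearIndependent_mk_X_sub_C_pow {R : Type*} [CommRing R] (a : R) (m : ℕ) :
    LinearIndependent R fun l : Fin m =>
      Ideal.Quotient.mk (Ideal.span {(X - C a) ^ m}) ((X - C a) ^ (l : ℕ)) := by
  rw [Fintype.linearIndependent_iff]
  intro g hg i
  have hdvd : (X - C a) ^ m ∣ ∑ l : Fin m, C (g l) * (X - C a) ^ (l : ℕ) := by
    rw [← Ideal.mem_span_singleton, ← Ideal.Quotient.eq_zero_iff_mem, map_sum, ← hg]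
    refine Finset.sum_congr rfl fun l _ => ?_
    rw [← smul_eq_C_mul]
    rfl
  have hdvd_taylor : X ^ m ∣ ∑ l : Fin m, C (g l) * X ^ (l : ℕ) := by
    simpa using map_dvd (taylorAlgHom a) hdvd
  have hcoeff := X_pow_dvd_iff.1 hdvd_taylor i i.2
  simpa [finsetSum_coeff, coeff_X_pow, Fin.val_inj] using hcoeff

lemma exists_basis_eq_mk_X_sub_C_pow (a : K) (m : ℕ) :
    ∃ b : Basis (Fin m) K (K[X] ⧸ Ideal.span {(X - C a) ^ m}), ∀ l,
      b l = Ideal.Quotient.mk _ ((X - C a) ^ (l.rev : ℕ)) := by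
  have : Module.Finite K (K[X] ⧸ Ideal.span {(X - C a) ^ m}) :=
    ((monic_X_sub_C a).pow m).finite_quotient
  have hcard : Fintype.card (Fin m) = finrank K (K[X] ⧸ Ideal.span {(X - C a) ^ m}) := by
    simp [finrank_quotient_span_eq_natDegree]
  let b := basisOfLinearIndependentOfCardEqFinrank' _ (linearIndependent_mk_X_sub_C_pow a m) hcard
  exact ⟨b.reindex Fin.revPerm, fun l => by simp [b]⟩

lemma toMatrix_eq_jordanCell {R M : Type*} [CommRing R] [AddCommGroup M] [Module R M] {m : ℕ}
    (b : Basis (Fin m) R M) (f : End R M) (a : R)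
    (hf : ∀ l, f (b l) = a • b l + if h : 0 < (l : ℕ) then b ⟨l - 1, by omega⟩ else 0) :
    LinearMap.toMatrix b b f = jordanCell a m := by
  ext i l
  rw [LinearMap.toMatrix_apply, hf, jordanCell, of_apply]
  split_ifs <;> simp [Finsupp.single_apply, Fin.ext_iff] <;> grind

lemma exists_toMatrix_lsmul_X_eq_jordanCell (a : K) (m : ℕ) :
    ∃ b : Basis (Fin m) K (K[X] ⧸ Ideal.span {(X - C a) ^ m}),
      LinearMap.toMatrix b b (Algebra.lsmul K K _ (X : K[X])) = jordanCell a m := by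
  obtain ⟨b, hb⟩ := exists_basis_eq_mk_X_sub_C_pow a m
  refine ⟨b, toMatrix_eq_jordanCell b _ a fun l => ?_⟩
  have hX : (X : K[X]) • b l = a • b l + (X - C a) • b l := by
    have hC : C a • b l = a • b l := algebraMap_smul K[X] a (b l)
    rw [sub_smul, hC, add_sub_cancel]
  have hmul : (X - C a) • b l = Ideal.Quotient.mk _ ((X - C a) ^ (l.rev + 1 : ℕ)) := by
    rw [hb, pow_succ']
    rfl
  rw [Algebra.lsmul_apply, hX, hmul]
  split_ifs with hl
  · have hrev : ((⟨l - 1, by omega⟩ : Fin m).rev : ℕ) = l.rev + 1 := by grind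
    rw [hb ⟨l - 1, _⟩, hrev]
  · have hrev : (l.rev + 1 : ℕ) = m := by grind
    rw [hrev, Ideal.Quotient.eq_zero_iff_mem.2 (Ideal.mem_span_singleton_self _)]

variable [IsAlgClosed K]

lemma exists_associated_X_sub_C {p : K[X]} (hp : Irreducible p) : ∃ a, Associated p (X - C a) := by
  obtain ⟨a, ha⟩ := IsAlgClosed.exists_root p (degree_pos_of_irreducible hp).ne'
  exact ⟨a, ((irreducible_X_sub_C a).associated_of_dvd hp (dvd_iff_isRoot.2 ha)).symm⟩

lemma exists_linearEquiv_pi_quotient_X_sub_C_pow {V : Type*} [AddCommGroup V] [Module K V]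
    [Module.Finite K V] (f : End K V) :
    ∃ (ι : Type u) (_ : Fintype ι) (a : ι → K) (m : ι → ℕ)
      (Ψ : V ≃ₗ[K] ∀ i, K[X] ⧸ Ideal.span {(X - C (a i)) ^ m i}),
      ∀ v, Ψ (f v) = (X : K[X]) • Ψ v := by
  classical
  obtain ⟨ι, _, p, hp, m, ⟨Φ⟩⟩ :=
    equiv_directSum_of_isTorsion (AEval.isTorsion_of_finiteDimensional K V f)
  choose a ha using fun i => exists_associated_X_sub_C (hp i)
  have hspan (i : ι) : (K[X] ∙ p i ^ m i) = Ideal.span {(X - C (a i)) ^ m i} :=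
    Ideal.span_singleton_eq_span_singleton.2 ((ha i).pow_pow)
  let Φ' := Φ.trans <| (DirectSum.linearEquivFunOnFintype K[X] ι _).trans <|
    LinearEquiv.piCongrRight fun i => Submodule.quotEquivOfEq _ _ (hspan i)
  refine ⟨ι, ‹_›, a, m, (AEval'.of f).trans (Φ'.restrictScalars K), fun v => ?_⟩
  change Φ' (AEval'.of f (f v)) = (X : K[X]) • Φ' (AEval'.of f v)
  rw [← AEval'.X_smul_of, map_smul]

lemma exists_toMatrix_eq_jordanMatrix {V : Type*} [AddCommGroup V] [Module K V]
    [Module.Finite K V] (f : End K V) :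
    ∃ (ι : Type u) (_ : Fintype ι) (_ : DecidableEq ι) (lam : ι → K) (m : ι → ℕ)
      (b : Basis (Σ i, Fin (m i)) K V), LinearMap.toMatrix b b f = jordanMatrix lam m := by
  classical
  obtain ⟨ι, _, a, m, Ψ, hΨ⟩ := exists_linearEquiv_pi_quotient_X_sub_C_pow f
  choose b hb using fun i => exists_toMatrix_lsmul_X_eq_jordanCell (a i) (m i)
  refine ⟨ι, ‹_›, inferInstance, a, m, (Pi.basis b).map Ψ.symm, ?_⟩
  have hconj : Ψ.conj f =
      LinearMap.piMap fun i =>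
        Algebra.lsmul K K (K[X] ⧸ Ideal.span {(X - C (a i)) ^ m i}) (X : K[X]) := by
    refine LinearMap.ext fun v => ?_
    rw [LinearEquiv.conj_apply_apply, hΨ, LinearEquiv.apply_symm_apply]
    rfl
  have hmat : LinearMap.toMatrix ((Pi.basis b).map Ψ.symm) ((Pi.basis b).map Ψ.symm) f =
      LinearMap.toMatrix (Pi.basis b) (Pi.basis b) (Ψ.conj f) := by
    ext
    simp [LinearMap.toMatrix_apply, LinearEquiv.conj_apply]
  simp only [hmat, hconj, toMatrix_piMap_basis, hb, jordanMatrix]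

lemma exists_hasJordanForm {n : Type*} [Fintype n] [DecidableEq n] (A : Matrix n n K) :
    ∃ (k : ℕ) (lam : Fin k → K) (m : Fin k → ℕ), (∀ i, 0 < m i) ∧ HasJordanForm A lam m := by
  obtain ⟨ι, _, _, lam, m, b, hb⟩ := exists_toMatrix_eq_jordanMatrix A.toLin'
  let e := b.indexEquiv (Pi.basisFun K n)
  have hA : HasJordanForm A lam m := by
    refine ⟨e, ?_⟩
    have hreindex : reindex e e (jordanMatrix lam m) =
        LinearMap.toMatrix (b.reindex e) (b.reindex e) A.toLin' := by
      rw [← hb]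
      ext
      simp [LinearMap.toMatrix_apply]
    have hstd : LinearMap.toMatrix (Pi.basisFun K n) (Pi.basisFun K n) A.toLin' = A := by
      rw [← toLin_eq_toLin', LinearMap.toMatrix_toLin]
    have hconj := isConj_toMatrix (b.reindex e) (Pi.basisFun K n) A.toLin'
    rwa [hstd, ← hreindex] at hconj
  let s := (Fintype.equivFin {i // 0 < m i}).symm
  refine ⟨_, lam ∘ Subtype.val ∘ s, m ∘ Subtype.val ∘ s, fun i => (s i).2,
    (hasJordanForm_comp_iff (Subtype.val_injective.comp s.injective) fun i hi => ?_).2 hA⟩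
  simpa [s.surjective.range_comp] using hi

end Existence

section Inverse

variable {n ι K : Type*} [Fintype n] [DecidableEq n] [Field K] {A : Matrix n n K}

lemma hasJordanForm_iff_forall_rank [IsAlgClosed K] [Fintype ι] [DecidableEq ι] {lam : ι → K}
    {m : ι → ℕ} :
    HasJordanForm A lam m ↔
      ∀ μ j, ((A - algebraMap K _ μ) ^ j).rank + jordanNullity lam m μ j = Fintype.card n := by
  refine ⟨fun hA μ j => hA.rank_add_jordanNullity μ j, fun h => ?_⟩
  obtain ⟨k, lam', m', hm', hA⟩ := exists_hasJordanForm A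
  let s : {i // 0 < m i} → ι := Subtype.val
  have hs (i : ι) (hi : i ∉ Set.range s) : m i = 0 := by simpa [s] using hi
  obtain ⟨e, rfl, rfl⟩ :
      ∃ e : Fin k ≃ {i // 0 < m i}, (lam ∘ s) ∘ e = lam' ∧ (m ∘ s) ∘ e = m' := by
    refine exists_equiv_of_jordanNullity_eq hm' Subtype.prop fun μ j => ?_
    rw [jordanNullity_comp lam m Subtype.val_injective hs]
    exact Nat.add_left_cancel ((hA.rank_add_jordanNullity μ j).trans (h μ j).symm)
  refine (hasJordanForm_comp_iff (Subtype.val_injective.comp e.injective) fun i hi => hs i ?_).1 hA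
  rwa [e.surjective.range_comp] at hi

lemma rank_inv_sub_algebraMap_inv_pow (hA : IsUnit A) (μ : K) (j : ℕ) :
    ((A⁻¹ - algebraMap K _ μ⁻¹) ^ j).rank = ((A - algebraMap K _ μ) ^ j).rank := by
  have hdet := (isUnit_iff_isUnit_det A).1 hA
  have hinv : IsUnit A⁻¹ := isUnit_nonsing_inv_iff.2 hA
  obtain rfl | hμ := eq_or_ne μ 0
  · rw [_root_.inv_zero, map_zero, sub_zero, sub_zero, rank_of_isUnit _ (hinv.pow j),
      rank_of_isUnit _ (hA.pow j)]
  have hfactor : A⁻¹ - algebraMap K _ μ⁻¹ = (-μ⁻¹ • A⁻¹) * (A - algebraMap K _ μ) := by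
    simp only [Algebra.algebraMap_eq_smul_one, neg_smul, mul_sub, neg_mul, smul_mul_assoc,
      mul_smul_comm, nonsing_inv_mul _ hdet, mul_one, smul_neg, smul_smul, mul_inv_cancel₀ hμ,
      one_smul]
    abel
  have hcomm : Commute (-μ⁻¹ • A⁻¹) (A - algebraMap K _ μ) := by
    have hA_comm : Commute A⁻¹ A := by
      rw [Commute, SemiconjBy, nonsing_inv_mul _ hdet, mul_nonsing_inv _ hdet]
    exact (hA_comm.sub_right (Algebra.commute_algebraMap_right μ A⁻¹)).smul_left _
  have hunit : IsUnit ((-μ⁻¹ • A⁻¹) ^ j).det := by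
    have hμ' : -μ⁻¹ ≠ 0 := neg_ne_zero.2 (inv_ne_zero hμ)
    exact (isUnit_iff_isUnit_det _).1 ((hinv.smul (Units.mk0 _ hμ')).pow j)
  rw [hfactor, hcomm.mul_pow, rank_mul_eq_right_of_isUnit_det _ _ hunit]

lemma HasJordanForm.inv [IsAlgClosed K] [Finite ι] [DecidableEq ι] {lam : ι → K} {m : ι → ℕ}
    (hJ : HasJordanForm A lam m) (hA : IsUnit A) : HasJordanForm A⁻¹ (fun i => (lam i)⁻¹) m := by
  cases nonempty_fintype ι
  rw [hasJordanForm_iff_forall_rank] at hJ ⊢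
  intro μ j
  have hnull : jordanNullity (fun i => (lam i)⁻¹) m μ j = jordanNullity lam m μ⁻¹ j := by
    simpa using jordanNullity_map_of_injective inv_injective lam m μ⁻¹ j
  rw [hnull, ← hJ μ⁻¹ j, ← rank_inv_sub_algebraMap_inv_pow hA, inv_inv]

lemma HasJordanForm.ne_zero [Finite ι] [DecidableEq ι] {lam : ι → K} {m : ι → ℕ}
    (hJ : HasJordanForm A lam m) (hA : IsUnit A) {i : ι} (hi : 0 < m i) : lam i ≠ 0 := by
  cases nonempty_fintype ι
  intro hlam
  have hnull : jordanNullity lam m 0 1 = 0 := by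
    have h := hJ.rank_add_jordanNullity 0 1
    rwa [map_zero, sub_zero, pow_one, rank_of_isUnit A hA, Nat.add_eq_left] at h
  rw [jordanNullity, Finset.sum_eq_zero_iff] at hnull
  have := hnull i (Finset.mem_univ i)
  rw [if_pos hlam] at this
  omega

end Inverse

theorem c_reversible_iff_jordan_blocks_invariant_general {n K : Type*} [Fintype n] [DecidableEq n]
    [Field K] [IsAlgClosed K] (τ : K →+* K) {A : Matrix n n K} (hA : IsUnit A) :
    (∃ P : Matrix n n K, IsUnit P ∧ P * A * P⁻¹ = (A.map τ)⁻¹) ↔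
      ∃ (k : ℕ) (lams : Fin k → K) (ms : Fin k → ℕ) (e : (Σ i : Fin k, Fin (ms i)) ≃ n)
        (Q : Matrix n n K),
        (∀ i, lams i ≠ 0) ∧ IsUnit Q ∧ A = Q * reindex e e (jordanMatrix lams ms) * Q⁻¹ ∧
        ∃ σ : Equiv.Perm (Fin k), (∀ i, lams (σ i) = (τ (lams i))⁻¹) ∧ ∀ i, ms (σ i) = ms i := by
  rw [← isConj_iff_exists_isUnit]
  have hAτ : IsUnit (A.map τ) := hA.map τ.mapMatrix
  constructor
  · intro hconj
    obtain ⟨k, lams, ms, hms, hJ⟩ := exists_hasJordanForm A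
    have hJτ : HasJordanForm A (fun i => (τ (lams i))⁻¹) ms :=
      ((hJ.map τ).inv hAτ).of_isConj hconj.symm
    obtain ⟨σ, hσ, hσm⟩ := hJτ.exists_equiv hJ hms hms
    obtain ⟨e, Q, hQ, hAQ⟩ := hasJordanForm_iff_exists_isUnit.1 hJ
    exact ⟨k, lams, ms, e, Q, fun i => hJ.ne_zero hA (hms i), hQ, hAQ, σ, congrFun hσ,
      congrFun hσm⟩
  · rintro ⟨k, lams, ms, e, Q, -, hQ, hAQ, σ, hσ, hσm⟩
    have hJ : HasJordanForm A lams ms := hasJordanForm_iff_exists_isUnit.2 ⟨e, Q, hQ, hAQ⟩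
    have hJτ : HasJordanForm (A.map τ)⁻¹ (lams ∘ σ) (ms ∘ σ) := by
      have hlams : lams ∘ σ = fun i => (τ (lams i))⁻¹ := funext hσ
      have hms : ms ∘ σ = ms := funext hσm
      rw [hlams, hms]
      exact (hJ.map τ).inv hAτ
    exact hJ.isConj ((hasJordanForm_comp_iff σ.injective (by simp)).1 hJτ)

/-- `A ∈ SL(n, ℂ)` is c-reversible (conjugate to `(conj A)⁻¹`) iff the
multiset of Jordan blocks of `A` is invariant under
`J(λ, m) ↦ J(conj(λ)⁻¹, m)`, i.e. `A` has a Jordan form whose block data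
`(λᵢ, mᵢ)` admits a permutation `σ` with `λ_{σ i} = conj(λᵢ)⁻¹` and
`m_{σ i} = mᵢ`. -/
theorem c_reversible_iff_jordan_blocks_invariant
    (n : ℕ) (A : Matrix (Fin n) (Fin n) ℂ) (hA : A.det = 1) :
    (∃ P : Matrix (Fin n) (Fin n) ℂ, IsUnit P ∧
        P * A * P⁻¹ = (A.map (starRingEnd ℂ))⁻¹) ↔
      ∃ (k : ℕ) (lams : Fin k → ℂ) (ms : Fin k → ℕ)
        (e : (Σ i : Fin k, Fin (ms i)) ≃ Fin n)
        (Q : Matrix (Fin n) (Fin n) ℂ),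
        (∀ i, lams i ≠ 0) ∧ IsUnit Q ∧
        A = Q * (Matrix.reindex e e
              (Matrix.blockDiagonal' fun i => jordanBlock (lams i) (ms i))) * Q⁻¹ ∧
        ∃ σ : Equiv.Perm (Fin k),
          (∀ i, lams (σ i) = (starRingEnd ℂ (lams i))⁻¹) ∧ ∀ i, ms (σ i) = ms i := by
  exact c_reversible_iff_jordan_blocks_invariant_general (starRingEnd ℂ)
    ((isUnit_iff_isUnit_det A).2 (hA ▸ isUnit_one))
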